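/- arXiv:2110.07265 — 6 statements merged into one kernel-verified Lean document; each statement's English description precedes it below -/
import Mathlib

section
/- Let d ≥ 1 and K ≥ 1 be integers, let Λ_1, …, Λ_K be symmetric positive definite d×d real matrices, set Λ_𝒞 := (∑_{c=1}^K Λ_c^{−1})^{−1}, and let 0 ≤ s < t < T be reals. Define the Kd×Kd block matrices V and W by blocks (for i, j ∈ {1,…,K}): V_{ii} = ((t−s)(T−t)/(T−s)) Λ_i + ((t−s)²/(T−s)) Λ_𝒞, V_{ij} = ((t−s)²/(T−s)) Λ_𝒞 for i ≠ j, W_{ii} = ((T−s)/((t−s)(T−t))) Λ_i^{−1} − (1/(T−t)) Λ_i^{−1} Λ_𝒞 Λ_i^{−1}, and W_{ij} = −(1/(T−t)) Λ_i^{−1} Λ_𝒞 Λ_j^{−1} for i ≠ j. Then V·W = I (the Kd×Kd identity), i.e. V is invertible with V^{−1} = W. Moreover, for any x_1, …, x_K ∈ ℝ^d, writing x̃ := Λ_𝒞 ∑_{c=1}^K Λ_c^{−1} x_c, the c-th d-dimensional block of (1/(t−s)) · V · (Λ_1^{−1} x_1, …, Λ_K^{−1} x_K) equals ((T−t)/(T−s))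 x_c + ((t−s)/(T−s)) x̃. -/
open Matrix

/-!
Regard `Kd × Kd` matrices as `K × K` matrices over the ring of `d × d` matrices. With
`D = diag(Λ₁, …, Λ_K)` and `P` the matrix all of whose blocks are `Λ_𝒞`, one has
`V = α D + β P` and `W = γ D⁻¹ - δ D⁻¹ P D⁻¹` for scalars `α`, `β`, `γ`, `δ`. Since
`Λ_𝒞 (∑ Λ_c⁻¹) Λ_𝒞 = Λ_𝒞`, the matrix `P D⁻¹` is idempotent, so
`V W = αγ + (βγ - (α + β)δ) P D⁻¹`, and the scalars satisfy `αγ = 1` and `βγ = (α + β)δ`.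
The conditional mean is read off from `V D⁻¹ = α + β P D⁻¹`.
-/

theorem smul_add_smul_mul_smul_sub_smul_eq_one {𝕜 R : Type*} [CommRing 𝕜] [Ring R] [Algebra 𝕜 R]
    {D E P : R} {α β γ δ : 𝕜} (hDE : D * E = 1) (hPEP : P * E * P = P)
    (hαγ : α * γ = 1) (hβγ : β * γ = (α + β) * δ) :
    (α • D + β • P) * (γ • E - δ • (E * P * E)) = 1 := by
  have hDEPE : D * (E * P * E) = P * E := by
    rw [← mul_assoc, ← mul_assoc, hDE, one_mul]
  have hPEPE : P * (E * P * E) = P * E := by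
    rw [← mul_assoc, ← mul_assoc, hPEP]
  calc (α • D + β • P) * (γ • E - δ • (E * P * E))
      = (α * γ) • (1 : R) + (β * γ - (α + β) * δ) • (P * E) := by
        simp only [add_mul, mul_sub, smul_mul_smul_comm, hDE, hDEPE, hPEPE]
        module
    _ = 1 := by rw [hαγ, hβγ, sub_self, one_smul, zero_smul, add_zero]

theorem of_const_mul_diagonal_mul_of_const {ι R : Type*} [Fintype ι] [DecidableEq ι]
    [NonUnitalSemiring R] (A : R) (B : ι → R) (C : R) :
    (of fun _ _ => A : Matrix ι ι R) * diagonal B * (of fun _ _ => C : Matrix ι ι R) =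
      of fun _ _ => A * (∑ c, B c) * C := by
  ext i j
  rw [mul_apply]
  simp only [mul_diagonal, of_apply, Finset.mul_sum, Finset.sum_mul]

theorem comp_mulVec_uncurry {I J K L R : Type*} [Fintype J] [Fintype L]
    [NonUnitalNonAssocSemiring R] (M : Matrix I J (Matrix K L R)) (y : J → L → R) (i : I) (k : K) :
    (comp I J K L R M *ᵥ fun jl => y jl.1 jl.2) (i, k) = (∑ j, M i j *ᵥ y j) k := by
  simp only [mulVec, dotProduct, comp_apply, Finset.sum_apply, Fintype.sum_prod_type]

section Fusion

variable {ι n 𝕜 : Type*} [Fintype ι] [Fintype n] [DecidableEq n] [Field 𝕜]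

/-- The matrix `Λ_𝒞`, the inverse of the sum of the precision matrices `Λ_c⁻¹`. -/
noncomputable def fusedCov (Λ : ι → Matrix n n 𝕜) : Matrix n n 𝕜 := (∑ c, (Λ c)⁻¹)⁻¹

theorem fusedCov_mul_sum_inv_mul_fusedCov {Λ : ι → Matrix n n 𝕜} (hS : IsUnit (∑ c, (Λ c)⁻¹)) :
    fusedCov Λ * (∑ c, (Λ c)⁻¹) * fusedCov Λ = fusedCov Λ := by
  rw [fusedCov, nonsing_inv_mul _ ((isUnit_iff_isUnit_det _).1 hS), one_mul]

variable [DecidableEq ι]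

/-- The covariance `V_{s,t}` of the fusion proposal, as a matrix of blocks; `Matrix.comp` turns it
into a matrix of scalars. -/
noncomputable def proposalCov (Λ : ι → Matrix n n 𝕜) (s t T : 𝕜) : Matrix ι ι (Matrix n n 𝕜) :=
  of fun i j =>
    if i = j then
      ((t - s) * (T - t) / (T - s)) • Λ i + ((t - s) ^ 2 / (T - s)) • fusedCov Λ
    else ((t - s) ^ 2 / (T - s)) • fusedCov Λ

/-- The precision matrix `W` of the fusion proposal, the inverse of `proposalCov`, in the same block
form. -/
noncomputable def proposalPrecision (Λ : ι → Matrix n n 𝕜) (s t T : 𝕜) :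
    Matrix ι ι (Matrix n n 𝕜) :=
  of fun i j =>
    if i = j then
      ((T - s) / ((t - s) * (T - t))) • (Λ i)⁻¹ -
        (1 / (T - t)) • ((Λ i)⁻¹ * fusedCov Λ * (Λ j)⁻¹)
    else -((1 / (T - t)) • ((Λ i)⁻¹ * fusedCov Λ * (Λ j)⁻¹))

theorem proposalCov_eq_smul_diagonal_add (Λ : ι → Matrix n n 𝕜) (s t T : 𝕜) :
    proposalCov Λ s t T =
      ((t - s) * (T - t) / (T - s)) • diagonal Λ +
        ((t - s) ^ 2 / (T - s)) • of fun _ _ => fusedCov Λ := by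
  ext1 i j
  obtain rfl | hij := eq_or_ne i j
  · simp [proposalCov]
  · simp [proposalCov, hij]

theorem proposalPrecision_eq_smul_diagonal_sub (Λ : ι → Matrix n n 𝕜) (s t T : 𝕜) :
    proposalPrecision Λ s t T =
      ((T - s) / ((t - s) * (T - t))) • diagonal (fun c => (Λ c)⁻¹) -
        (1 / (T - t)) • (diagonal (fun c => (Λ c)⁻¹) * (of fun _ _ => fusedCov Λ) *
          diagonal (fun c => (Λ c)⁻¹)) := by
  ext1 i j
  obtain rfl | hij := eq_or_ne i j
  · simp [proposalPrecision]
  · simp [proposalPrecision, hij]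

theorem proposalCov_mul_proposalPrecision {Λ : ι → Matrix n n 𝕜} (hΛ : ∀ c, IsUnit (Λ c))
    (hS : IsUnit (∑ c, (Λ c)⁻¹)) {s t T : 𝕜} (hst : s ≠ t) (htT : t ≠ T) (hsT : s ≠ T) :
    proposalCov Λ s t T * proposalPrecision Λ s t T = 1 := by
  have hts : t - s ≠ 0 := sub_ne_zero.2 hst.symm
  have hTt : T - t ≠ 0 := sub_ne_zero.2 htT.symm
  have hTs : T - s ≠ 0 := sub_ne_zero.2 hsT.symm
  rw [proposalCov_eq_smul_diagonal_add, proposalPrecision_eq_smul_diagonal_sub]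
  refine smul_add_smul_mul_smul_sub_smul_eq_one ?_ ?_ ?_ ?_
  · simp only [diagonal_mul_diagonal, mul_nonsing_inv _ ((isUnit_iff_isUnit_det _).1 (hΛ _)),
      diagonal_one]
  · rw [of_const_mul_diagonal_mul_of_const, fusedCov_mul_sum_inv_mul_fusedCov hS]
  · field_simp
  · field_simp
    ring

theorem sum_proposalCov_mulVec_inv_mulVec {Λ : ι → Matrix n n 𝕜} (hΛ : ∀ c, IsUnit (Λ c))
    (s t T : 𝕜) (x : ι → n → 𝕜) (c : ι) :
    ∑ j, proposalCov Λ s t T c j *ᵥ ((Λ j)⁻¹ *ᵥ x j) =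
      ((t - s) * (T - t) / (T - s)) • x c +
        ((t - s) ^ 2 / (T - s)) • (fusedCov Λ *ᵥ ∑ j, (Λ j)⁻¹ *ᵥ x j) := by
  have hdiag : ∑ j, diagonal Λ c j *ᵥ ((Λ j)⁻¹ *ᵥ x j) = x c := by
    rw [Fintype.sum_eq_single c fun j hj => by rw [diagonal_apply_ne _ hj.symm, zero_mulVec],
      diagonal_apply_eq, mulVec_mulVec, mul_nonsing_inv _ ((isUnit_iff_isUnit_det _).1 (hΛ c)),
      one_mulVec]
  simp only [proposalCov_eq_smul_diagonal_add, Matrix.add_apply, Matrix.smul_apply,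
    of_apply, add_mulVec, smul_mulVec, Finset.sum_add_distrib, ← Finset.smul_sum, ← mulVec_sum,
    hdiag]

theorem statement2_general {Λ : ι → Matrix n n 𝕜} (hΛ : ∀ c, IsUnit (Λ c))
    (hS : IsUnit (∑ c, (Λ c)⁻¹)) {s t T : 𝕜} (hst : s ≠ t) (htT : t ≠ T) (hsT : s ≠ T) :
    comp ι ι n n 𝕜 (proposalCov Λ s t T) * comp ι ι n n 𝕜 (proposalPrecision Λ s t T) = 1 ∧
      ∀ (x : ι → n → 𝕜) (c : ι) (a : n),
        (((1 / (t - s)) • comp ι ι n n 𝕜 (proposalCov Λ s t T)) *ᵥ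
            fun p => ((Λ p.1)⁻¹ *ᵥ x p.1) p.2) (c, a) =
          (T - t) / (T - s) * x c a +
            (t - s) / (T - s) * (fusedCov Λ *ᵥ ∑ j, (Λ j)⁻¹ *ᵥ x j) a := by
  constructor
  · rw [← compRingEquiv_apply, ← compRingEquiv_apply, ← map_mul,
      proposalCov_mul_proposalPrecision hΛ hS hst htT hsT, map_one]
  · intro x c a
    have hts : t - s ≠ 0 := sub_ne_zero.2 hst.symm
    rw [smul_mulVec, Pi.smul_apply, comp_mulVec_uncurry _ fun j => (Λ j)⁻¹ *ᵥ x j,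
      sum_proposalCov_mulVec_inv_mulVec hΛ]
    simp only [Pi.add_apply, Pi.smul_apply, smul_eq_mul]
    field_simp

end Fusion

theorem isUnit_sum_inv_of_posDef {ι n 𝕜 : Type*} [Fintype ι] [Nonempty ι] [Fintype n]
    [DecidableEq n] [Field 𝕜] [PartialOrder 𝕜] [AddLeftMono 𝕜] [StarRing 𝕜]
    {Λ : ι → Matrix n n 𝕜} (hΛ : ∀ c, (Λ c).PosDef) : IsUnit (∑ c, (Λ c)⁻¹) :=
  (posDef_sum Finset.univ_nonempty fun c _ => (hΛ c).inv).isUnit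

/-- Proposition 2(a) of the paper: the block matrix `W` is the inverse of the
GBF proposal covariance block matrix `V`, and `(1/(t-s)) • V` applied to the stacked vector of
precision-weighted states gives the conditional means `((T-t)/(T-s)) x_c + ((t-s)/(T-s)) x̃`. -/
theorem statement2 (d K : ℕ) (hd : 1 ≤ d) (hK : 1 ≤ K)
    (Λ : Fin K → Matrix (Fin d) (Fin d) ℝ) (hΛ : ∀ c, (Λ c).PosDef)
    (s t T : ℝ) (hs : 0 ≤ s) (hst : s < t) (htT : t < T) :
    let ΛC : Matrix (Fin d) (Fin d) ℝ := (∑ c, (Λ c)⁻¹)⁻¹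
    let V : Matrix (Fin K × Fin d) (Fin K × Fin d) ℝ :=
      Matrix.of fun pq rs =>
        (if pq.1 = rs.1 then
            (((t - s) * (T - t) / (T - s)) • Λ pq.1 + ((t - s) ^ 2 / (T - s)) • ΛC)
          else ((t - s) ^ 2 / (T - s)) • ΛC) pq.2 rs.2
    let W : Matrix (Fin K × Fin d) (Fin K × Fin d) ℝ :=
      Matrix.of fun pq rs =>
        (if pq.1 = rs.1 then
            (((T - s) / ((t - s) * (T - t))) • (Λ pq.1)⁻¹ -
              (1 / (T - t)) • ((Λ pq.1)⁻¹ * ΛC * (Λ rs.1)⁻¹))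
          else -((1 / (T - t)) • ((Λ pq.1)⁻¹ * ΛC * (Λ rs.1)⁻¹))) pq.2 rs.2
    V * W = 1 ∧
      ∀ x : Fin K → Fin d → ℝ,
        let xt : Fin d → ℝ := ΛC.mulVec (∑ c, (Λ c)⁻¹.mulVec (x c))
        ∀ (c : Fin K) (a : Fin d),
          ((1 / (t - s)) • V).mulVec (fun pq => (Λ pq.1)⁻¹.mulVec (x pq.1) pq.2) (c, a) =
            ((T - t) / (T - s)) * x c a + ((t - s) / (T - s)) * xt a := by
  have : NeZero K := ⟨by lia⟩
  exact statement2_general (fun c => (hΛ c).isUnit) (isUnit_sum_inv_of_posDef hΛ)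
    hst.ne htT.ne (hst.trans htT).ne
end

section
/- Let d ≥ 1, let f : ℝ^d → (0, ∞) be twice continuously differentiable, let Λ be a symmetric positive definite d×d real matrix with positive definite square root Λ^{1/2}, and define φ(x) := ½( ∇log f(x)ᵀ Λ ∇log f(x) + Tr(Λ ∇²log f(x)) ). Let R ⊆ ℝ^d be a convex set, let x̂ ∈ R, and let D, P ≥ 0 be constants such that ‖Λ^{−1/2}(x − x̂)‖ ≤ D for all x ∈ R and ‖Λ ∇²log f(x)‖_op ≤ P for all x ∈ R, where ‖·‖_op is the operator norm induced by the Euclidean norm. Then for all x ∈ R: −½ d P ≤ φ(x) ≤ ½ [ ( ‖Λ^{1/2} ∇log f(x̂)‖ + D·P )² + d P ]. -/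
open Matrix

/-- The Euclidean norm on `Fin d → ℝ`. -/
noncomputable def euclNorm {d : ℕ} (v : Fin d → ℝ) : ℝ := Real.sqrt (∑ i, v i ^ 2)

/-- The gradient of `log f`, expressed coordinatewise via the Fréchet derivative. -/
noncomputable def gradLog {d : ℕ} (f : (Fin d → ℝ) → ℝ) (x : Fin d → ℝ) : Fin d → ℝ :=
  fun i => fderiv ℝ (fun y => Real.log (f y)) x (Pi.single i 1)

/-- The Hessian matrix of `log f`. -/
noncomputable def hessLog {d : ℕ} (f : (Fin d → ℝ) → ℝ) (x : Fin d → ℝ) :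
    Matrix (Fin d) (Fin d) ℝ :=
  Matrix.of fun i j =>
    fderiv ℝ (fun y => fderiv ℝ (fun z => Real.log (f z)) y (Pi.single j 1)) x (Pi.single i 1)

/-- `φ(x) = ½( ∇log f(x)ᵀ Λ ∇log f(x) + Tr(Λ ∇²log f(x)) )`. -/
noncomputable def phiFn {d : ℕ} (f : (Fin d → ℝ) → ℝ) (Λ : Matrix (Fin d) (Fin d) ℝ)
    (x : Fin d → ℝ) : ℝ :=
  (gradLog f x ⬝ᵥ Λ.mulVec (gradLog f x) + (Λ * hessLog f x).trace) / 2

/-!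
Write `Λ = S Sᵀ`, with `S = Λ^{1/2}` in the theorem, `g = ∇log f` and `H = ∇²log f`, so that
`2 φ = ‖Sᵀ g‖² + Tr(Λ H)`. The trace is at most `d ‖Λ H‖` in absolute value, since every entry of a
matrix is bounded by its operator norm. In the whitened coordinate `u = S⁻¹ (x - x̂)` the field
`Sᵀ g` has Jacobian `Sᵀ H S`. This matrix is symmetric and is a product `(Sᵀ H) S` whose factors in
the opposite order give `S Sᵀ H = Λ H`; as `AB` and `BA` have the same spectral radius, its norm is
at most `‖Λ H‖ ≤ P`. Hence `Sᵀ g` is `P`-Lipschitz in `u` along the segment from `x̂` to `x`, which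
lies in `R`.
-/

section SpectralRadius

lemma spectralRadius_eq_iSup_spectrum_sdiff_zero {𝕜 A : Type*} [NormedField 𝕜] [Ring A]
    [Algebra 𝕜 A] (a : A) : spectralRadius 𝕜 a = ⨆ k ∈ spectrum 𝕜 a \ {0}, (‖k‖₊ : ENNReal) := by
  refine le_antisymm (iSup₂_le fun k hk => ?_) (biSup_mono Set.sdiff_subset)
  rcases eq_or_ne k 0 with rfl | hk0
  · simp
  · exact le_biSup (fun k : 𝕜 => (‖k‖₊ : ENNReal)) ⟨hk, hk0⟩

lemma spectralRadius_mul_comm {𝕜 A : Type*} [NormedField 𝕜] [Ring A] [Algebra 𝕜 A] (a b : A) :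
    spectralRadius 𝕜 (a * b) = spectralRadius 𝕜 (b * a) := by
  rw [spectralRadius_eq_iSup_spectrum_sdiff_zero, spectrum.nonzero_mul_comm,
    ← spectralRadius_eq_iSup_spectrum_sdiff_zero]

lemma opNorm_mul_le_opNorm_mul_swap_of_isSelfAdjoint {𝕜 E : Type*} [RCLike 𝕜]
    [NormedAddCommGroup E] [InnerProductSpace 𝕜 E] [CompleteSpace E] {A B : E →L[𝕜] E}
    (hAB : IsSelfAdjoint (A * B)) : ‖A * B‖ ≤ ‖B * A‖ := by
  nontriviality E
  have hle : (‖A * B‖₊ : ENNReal) ≤ ‖B * A‖₊ := calc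
    (‖A * B‖₊ : ENNReal) = spectralRadius 𝕜 (A * B) :=
      ((A * B).spectralRadius_eq_nnnorm hAB).symm
    _ = spectralRadius 𝕜 (B * A) := spectralRadius_mul_comm A B
    _ ≤ ‖B * A‖₊ := spectrum.spectralRadius_le_nnnorm (B * A)
  exact_mod_cast hle

end SpectralRadius

section L2OpNorm

open scoped Matrix.Norms.L2Operator

variable {𝕜 n : Type*} [RCLike 𝕜] [Fintype n] [DecidableEq n]

lemma l2_opNorm_mul_le_l2_opNorm_mul_swap_of_isHermitian {A B : Matrix n n 𝕜}
    (hAB : (A * B).IsHermitian) : ‖A * B‖ ≤ ‖B * A‖ := by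
  simp only [cstar_norm_def, map_mul]
  apply opNorm_mul_le_opNorm_mul_swap_of_isSelfAdjoint
  rw [← map_mul]
  exact hAB.isSelfAdjoint.map toEuclideanCLM

lemma norm_apply_le_l2_opNorm {m : Type*} [Fintype m] (A : Matrix m n 𝕜) (i : m) (j : n) :
    ‖A i j‖ ≤ ‖A‖ := by
  simpa using (PiLp.norm_apply_le _ i).trans (l2_opNorm_mulVec A (EuclideanSpace.single j 1))

lemma norm_trace_le_card_mul_l2_opNorm (A : Matrix n n 𝕜) :
    ‖A.trace‖ ≤ Fintype.card n * ‖A‖ := by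
  simpa [trace] using norm_sum_le_of_le Finset.univ fun i _ => norm_apply_le_l2_opNorm A i i

end L2OpNorm

section EuclNorm

open scoped Matrix.Norms.L2Operator

variable {m n : ℕ}

lemma euclNorm_eq_norm_toLp (v : Fin n → ℝ) : euclNorm v = ‖WithLp.toLp 2 v‖ := by
  simp [euclNorm, EuclideanSpace.norm_eq]

lemma euclNorm_nonneg (v : Fin n → ℝ) : 0 ≤ euclNorm v := Real.sqrt_nonneg _

lemma euclNorm_le_add_euclNorm_sub (v w : Fin n → ℝ) :
    euclNorm v ≤ euclNorm w + euclNorm (v - w) := by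
  simpa only [euclNorm_eq_norm_toLp, WithLp.toLp_sub] using norm_le_norm_add_norm_sub' _ _

lemma euclNorm_sq (v : Fin n → ℝ) : euclNorm v ^ 2 = v ⬝ᵥ v := by
  rw [euclNorm, Real.sq_sqrt (by positivity)]
  simp only [dotProduct, sq]

lemma dotProduct_mul_transpose_mulVec (S : Matrix (Fin m) (Fin n) ℝ) (v : Fin m → ℝ) :
    v ⬝ᵥ (S * Sᵀ) *ᵥ v = euclNorm (Sᵀ *ᵥ v) ^ 2 := by
  rw [euclNorm_sq, ← mulVec_mulVec, dotProduct_mulVec, mulVec_transpose]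

lemma euclNorm_mulVec_le (A : Matrix (Fin m) (Fin n) ℝ) (v : Fin n → ℝ) :
    euclNorm (A *ᵥ v) ≤ ‖A‖ * euclNorm v := by
  rw [euclNorm_eq_norm_toLp, euclNorm_eq_norm_toLp]
  exact l2_opNorm_mulVec A (WithLp.toLp 2 v)

lemma l2_opNorm_le_of_forall_euclNorm_mulVec_le {A : Matrix (Fin m) (Fin n) ℝ} {P : ℝ} (hP : 0 ≤ P)
    (hA : ∀ v, euclNorm (A *ᵥ v) ≤ P * euclNorm v) : ‖A‖ ≤ P := by
  rw [l2_opNorm_def]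
  refine ContinuousLinearMap.opNorm_le_bound _ hP fun v => ?_
  have hAv := hA v.ofLp
  rw [euclNorm_eq_norm_toLp, euclNorm_eq_norm_toLp] at hAv
  exact hAv

end EuclNorm

section LogDerivatives

variable {d : ℕ} {f : (Fin d → ℝ) → ℝ} {x : Fin d → ℝ}

lemma hasFDerivAt_fderiv_log (hlog : ContDiffAt ℝ 2 (fun y => Real.log (f y)) x) :
    HasFDerivAt (fderiv ℝ fun y => Real.log (f y))
      (fderiv ℝ (fderiv ℝ fun y => Real.log (f y)) x) x :=
  ((hlog.fderiv_right (m := 1) (by norm_num)).differentiableAt one_ne_zero).hasFDerivAt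

lemma hessLog_apply (hlog : ContDiffAt ℝ 2 (fun y => Real.log (f y)) x) (i j : Fin d) :
    hessLog f x i j =
      fderiv ℝ (fderiv ℝ fun y => Real.log (f y)) x (Pi.single i 1) (Pi.single j 1) := by
  rw [hessLog, of_apply, ((hasFDerivAt_fderiv_log hlog).clm_apply (hasFDerivAt_const _ x)).fderiv]
  simp

lemma isHermitian_hessLog (hlog : ContDiffAt ℝ 2 (fun y => Real.log (f y)) x) :
    (hessLog f x).IsHermitian := by
  refine IsHermitian.ext fun i j => ?_
  rw [star_trivial, hessLog_apply hlog, hessLog_apply hlog]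
  exact hlog.isSymmSndFDerivAt (by simp) _ _

lemma hasFDerivAt_gradLog (hlog : ContDiffAt ℝ 2 (fun y => Real.log (f y)) x) :
    HasFDerivAt (gradLog f) (hessLog f x).mulVecLin.toContinuousLinearMap x := by
  -- Row `i` of `hessLog f x` is the derivative of `gradLog f` in direction `i`, so the Jacobian is
  -- a priori its transpose.
  refine hasFDerivAt_pi'.2 fun i => ?_
  convert! (hasFDerivAt_fderiv_log hlog).clm_apply (hasFDerivAt_const (Pi.single i 1) x) using 1
  refine ContinuousLinearMap.coe_injective (LinearMap.pi_ext' fun j => LinearMap.ext_ring ?_)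
  simp [← hessLog_apply hlog, ← (isHermitian_hessLog hlog).apply i j]

end LogDerivatives

section GradientBound

open scoped Matrix.Norms.L2Operator

variable {d : ℕ} {f : (Fin d → ℝ) → ℝ}

lemma l2_opNorm_transpose_mul_hessLog_mul_le {x : Fin d → ℝ}
    (hlog : ContDiffAt ℝ 2 (fun y => Real.log (f y)) x) (S : Matrix (Fin d) (Fin d) ℝ) :
    ‖Sᵀ * hessLog f x * S‖ ≤ ‖S * Sᵀ * hessLog f x‖ := by
  rw [Matrix.mul_assoc S]
  apply l2_opNorm_mul_le_l2_opNorm_mul_swap_of_isHermitian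
  simpa using isHermitian_conjTranspose_mul_mul S (isHermitian_hessLog hlog)

lemma euclNorm_transpose_mulVec_gradLog_add_mulVec_sub_le {P : ℝ} (S : Matrix (Fin d) (Fin d) ℝ)
    (x u : Fin d → ℝ)
    (hlog : ∀ z ∈ segment ℝ x (x + S *ᵥ u), ContDiffAt ℝ 2 (fun y => Real.log (f y)) z)
    (hP : ∀ z ∈ segment ℝ x (x + S *ᵥ u), ‖S * Sᵀ * hessLog f z‖ ≤ P) :
    euclNorm (Sᵀ *ᵥ gradLog f (x + S *ᵥ u) - Sᵀ *ᵥ gradLog f x) ≤ P * euclNorm u := by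
  have hseg : ∀ t ∈ Set.Icc (0 : ℝ) 1, x + t • S *ᵥ u ∈ segment ℝ x (x + S *ᵥ u) := by
    intro t ht
    rw [segment_eq_image']
    exact ⟨t, ht, by simp⟩
  have hderiv : ∀ t ∈ Set.Icc (0 : ℝ) 1,
      HasDerivAt (fun t : ℝ => WithLp.toLp 2 (Sᵀ *ᵥ gradLog f (x + t • S *ᵥ u)))
        (WithLp.toLp 2 ((Sᵀ * hessLog f (x + t • S *ᵥ u) * S) *ᵥ u)) t := by
    intro t ht
    have hline : HasDerivAt (fun t : ℝ => x + t • S *ᵥ u) (S *ᵥ u) t := by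
      simpa using ((hasDerivAt_id t).smul_const (S *ᵥ u)).const_add x
    have hgrad := (hasFDerivAt_gradLog (hlog _ (hseg t ht))).comp_hasDerivAt t hline
    have hcomp := ((EuclideanSpace.equiv (Fin d) ℝ).symm.toContinuousLinearMap.comp
      Sᵀ.mulVecLin.toContinuousLinearMap).hasFDerivAt.comp_hasDerivAt t hgrad
    rw [← mulVec_mulVec, ← mulVec_mulVec]
    exact hcomp
  have hbound : ∀ t ∈ Set.Icc (0 : ℝ) 1,
      euclNorm ((Sᵀ * hessLog f (x + t • S *ᵥ u) * S) *ᵥ u) ≤ P * euclNorm u := by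
    intro t ht
    refine (euclNorm_mulVec_le _ u).trans (mul_le_mul_of_nonneg_right ?_ (euclNorm_nonneg u))
    exact (l2_opNorm_transpose_mul_hessLog_mul_le (hlog _ (hseg t ht)) S).trans (hP _ (hseg t ht))
  simpa [euclNorm_eq_norm_toLp] using norm_image_sub_le_of_norm_deriv_le_segment_01'
    (fun t ht => (hderiv t ht).hasDerivWithinAt)
    (fun t ht => (euclNorm_eq_norm_toLp _).symm.trans_le (hbound t (Set.Ico_subset_Icc_self ht)))

lemma euclNorm_transpose_mulVec_gradLog_sub_le {P : ℝ} {S : Matrix (Fin d) (Fin d) ℝ}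
    (hS : IsUnit S) {x y : Fin d → ℝ}
    (hlog : ∀ z ∈ segment ℝ x y, ContDiffAt ℝ 2 (fun y => Real.log (f y)) z)
    (hP : ∀ z ∈ segment ℝ x y, ‖S * Sᵀ * hessLog f z‖ ≤ P) :
    euclNorm (Sᵀ *ᵥ gradLog f y - Sᵀ *ᵥ gradLog f x) ≤ P * euclNorm (S⁻¹ *ᵥ (y - x)) := by
  have hy : x + S *ᵥ S⁻¹ *ᵥ (y - x) = y := by
    rw [mulVec_mulVec, mul_nonsing_inv S ((isUnit_iff_isUnit_det S).1 hS), one_mulVec,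
      add_sub_cancel]
  have hLip := euclNorm_transpose_mulVec_gradLog_add_mulVec_sub_le (f := f) (P := P) S x
    (S⁻¹ *ᵥ (y - x))
  rw [hy] at hLip
  exact hLip hlog hP

lemma phiFn_mul_transpose {m : ℕ} (S : Matrix (Fin d) (Fin m) ℝ) (x : Fin d → ℝ) :
    phiFn f (S * Sᵀ) x =
      (euclNorm (Sᵀ *ᵥ gradLog f x) ^ 2 + (S * Sᵀ * hessLog f x).trace) / 2 := by
  rw [phiFn, dotProduct_mul_transpose_mulVec]

/-- `S` may be any invertible factor of the matrix `S * Sᵀ`, for instance a Cholesky factor. -/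
theorem statement3_general {R : Set (Fin d → ℝ)}
    (hf_pos : ∀ x ∈ R, 0 < f x) (hf : ∀ x ∈ R, ContDiffAt ℝ 2 f x)
    {S : Matrix (Fin d) (Fin d) ℝ} (hS : IsUnit S)
    {xhat : Fin d → ℝ} (hstar : StarConvex ℝ xhat R) {D P : ℝ} (hP : 0 ≤ P)
    (hDbd : ∀ x ∈ R, euclNorm (S⁻¹ *ᵥ (x - xhat)) ≤ D)
    (hPbd : ∀ x ∈ R, ∀ v, euclNorm ((S * Sᵀ * hessLog f x) *ᵥ v) ≤ P * euclNorm v) :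
    ∀ x ∈ R,
      -(d * P) / 2 ≤ phiFn f (S * Sᵀ) x ∧
        phiFn f (S * Sᵀ) x ≤ ((euclNorm (Sᵀ *ᵥ gradLog f xhat) + D * P) ^ 2 + d * P) / 2 := by
  intro x hx
  have hlog (z) (hz : z ∈ R) : ContDiffAt ℝ 2 (fun y => Real.log (f y)) z :=
    (hf z hz).log (hf_pos z hz).ne'
  have hnorm (z) (hz : z ∈ R) : ‖S * Sᵀ * hessLog f z‖ ≤ P :=
    l2_opNorm_le_of_forall_euclNorm_mulVec_le hP (hPbd z hz)
  have htrace : |(S * Sᵀ * hessLog f x).trace| ≤ d * P := by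
    grw [← hnorm x hx]
    simpa using norm_trace_le_card_mul_l2_opNorm (S * Sᵀ * hessLog f x)
  have hsub : segment ℝ xhat x ⊆ R := hstar.segment_subset hx
  have hLip : euclNorm (Sᵀ *ᵥ gradLog f x - Sᵀ *ᵥ gradLog f xhat) ≤
      P * euclNorm (S⁻¹ *ᵥ (x - xhat)) :=
    euclNorm_transpose_mulVec_gradLog_sub_le hS (fun z hz => hlog z (hsub hz))
      fun z hz => hnorm z (hsub hz)
  have hgrad : euclNorm (Sᵀ *ᵥ gradLog f x) ≤ euclNorm (Sᵀ *ᵥ gradLog f xhat) + D * P := by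
    grw [euclNorm_le_add_euclNorm_sub _ (Sᵀ *ᵥ gradLog f xhat), hLip, hDbd x hx, mul_comm]
  have hgrad_sq := pow_le_pow_left₀ (euclNorm_nonneg _) hgrad 2
  have hgrad_sq_nonneg := sq_nonneg (euclNorm (Sᵀ *ᵥ gradLog f x))
  rw [phiFn_mul_transpose]
  constructor <;> linarith [(abs_le.1 htrace).1, (abs_le.1 htrace).2]

end GradientBound

/-- Proposition 3 of the paper: generic local lower and upper bounds for `φ`
on a convex region `R`, in terms of a bound `D` on `‖Λ^{-1/2}(x - x̂)‖` and a bound `P` on the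
operator norm of `Λ ∇²log f(x)` over `R`. -/
theorem statement3 (d : ℕ) (hd : 1 ≤ d)
    (f : (Fin d → ℝ) → ℝ) (hf_pos : ∀ x, 0 < f x) (hf : ContDiff ℝ 2 f)
    (Λ Λsq : Matrix (Fin d) (Fin d) ℝ) (hΛ : Λ.PosDef) (hΛsq : Λsq.PosDef)
    (hsq : Λsq * Λsq = Λ)
    (R : Set (Fin d → ℝ)) (hconv : Convex ℝ R)
    (xhat : Fin d → ℝ) (hxhat : xhat ∈ R)
    (D P : ℝ) (hD : 0 ≤ D) (hP : 0 ≤ P)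
    (hDbd : ∀ x ∈ R, euclNorm (Λsq⁻¹.mulVec (x - xhat)) ≤ D)
    (hPbd : ∀ x ∈ R, ∀ v : Fin d → ℝ, euclNorm ((Λ * hessLog f x).mulVec v) ≤ P * euclNorm v) :
    ∀ x ∈ R,
      -(d * P) / 2 ≤ phiFn f Λ x ∧
        phiFn f Λ x ≤ ((euclNorm (Λsq.mulVec (gradLog f xhat)) + D * P) ^ 2 + d * P) / 2 := by
  have hΛsq_transpose : Λsqᵀ = Λsq := by simpa using hΛsq.isHermitian.eq
  have hΛ_factor : Λsq * Λsqᵀ = Λ := by rw [hΛsq_transpose, hsq]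
  simpa only [hΛsq_transpose, hsq] using statement3_general (fun x _ => hf_pos x)
    (fun _ _ => hf.contDiffAt) hΛsq.isUnit (hconv.starConvex hxhat) hP hDbd
    (by simpa only [hΛ_factor] using hPbd)
end

section
/- Let s < t be reals, Δ := t − s, let h : ℝ → ℝ be measurable with L ≤ h(u) ≤ U for all u ∈ [s, t], where L < U are real constants. Let κ be Poisson distributed with mean (U − L)Δ, and conditionally on κ = k let ξ_1, …, ξ_k be i.i.d. uniform on [s, t]. Then the GPE-1 estimator ρ̃^{(a)} := e^{−L Δ} · ∏_{i=1}^{κ} ( (U − h(ξ_i)) / (U − L) ) satisfies: (i) E[ρ̃^{(a)}] = exp{ −∫_s^t h(u) du }; (ii) 0 ≤ ρ̃^{(a)} ≤ e^{−L Δ} almost surely, so ρ̃^{(a)} has finite variance. -/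
open MeasureTheory

/-!
Given `κ = k`, independence makes the mean of `∏ᵢ f (ξ_i)` equal to `(∫ f / Δ) ^ k`, so the Poisson
weights of mean `r Δ` sum it to an exponential series: `E ∏ᵢ f (ξ_i) = exp (r (∫ f - Δ))`, the
generating functional of a Poisson process of intensity `r`. For `r = U - L` and
`f = (U - h) / (U - L)` the exponent is `L Δ - ∫ h`, and the prefactor `e^{-LΔ}` removes `L Δ`.
-/

section PoissonEstimator

variable {α : Type*} [MeasurableSpace α]

/-- The contribution of the event `κ = k` to `E[F (ξ_1, …, ξ_κ)]`, where `κ` is Poisson with mean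
`r * μ(α)` and, given `κ`, the `ξ_i` are i.i.d. with law `μ / μ(α)`. The `k`-fold product law is
encoded as `μ(α)⁻ᵏ` times the `k`-fold product of `μ`. -/
noncomputable def poissonMixtureTerm (μ : Measure α) (r : ℝ) (k : ℕ)
    (F : (Fin k → α) → ℝ) : ℝ :=
  (Real.exp (-(r * μ.real Set.univ)) * (r * μ.real Set.univ) ^ k / (Nat.factorial k)) *
    ((μ.real Set.univ ^ k)⁻¹ * ∫ ξ, F ξ ∂(Measure.pi fun _ : Fin k => μ))

/-- The GPE-1 estimator of `exp (-∫ h ∂μ)` evaluated at the `k` points `ξ`; the total mass of `μ`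
plays the role of the interval length `Δ`. -/
noncomputable def gpeEstimator (μ : Measure α) (L U : ℝ) (h : α → ℝ) {k : ℕ}
    (ξ : Fin k → α) : ℝ :=
  Real.exp (-(L * μ.real Set.univ)) * ∏ i, (U - h (ξ i)) / (U - L)

theorem poissonMixtureTerm_const_mul (μ : Measure α) (r : ℝ) (k : ℕ) (c : ℝ)
    (F : (Fin k → α) → ℝ) :
    poissonMixtureTerm μ r k (fun ξ => c * F ξ) = c * poissonMixtureTerm μ r k F := by
  simp only [poissonMixtureTerm, integral_const_mul]
  ring

theorem poissonMixtureTerm_prod (μ : Measure α) [IsFiniteMeasure μ] [NeZero μ] (r : ℝ) (k : ℕ)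
    (f : α → ℝ) :
    poissonMixtureTerm μ r k (fun ξ => ∏ i, f (ξ i)) =
      Real.exp (-(r * μ.real Set.univ)) * ((r * ∫ x, f x ∂μ) ^ k / (Nat.factorial k)) := by
  have mass_ne_zero : μ.real Set.univ ≠ 0 := measureReal_univ_ne_zero
  rw [poissonMixtureTerm, integral_fintype_prod_eq_pow, Fintype.card_fin, mul_pow, mul_pow]
  field_simp

theorem hasSum_poissonMixtureTerm_prod (μ : Measure α) [IsFiniteMeasure μ] [NeZero μ] (r : ℝ)
    (f : α → ℝ) :
    HasSum (fun k => poissonMixtureTerm μ r k fun ξ => ∏ i, f (ξ i))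
      (Real.exp (r * (∫ x, f x ∂μ - μ.real Set.univ))) := by
  have exp_split : Real.exp (r * (∫ x, f x ∂μ - μ.real Set.univ)) =
      Real.exp (-(r * μ.real Set.univ)) * Real.exp (r * ∫ x, f x ∂μ) := by
    rw [← Real.exp_add]
    ring_nf
  simp only [poissonMixtureTerm_prod, exp_split]
  rw [Real.exp_eq_exp_ℝ]
  exact (NormedSpace.expSeries_div_hasSum_exp (r * ∫ x, f x ∂μ)).mul_left _

theorem hasSum_poissonMixtureTerm_gpeEstimator {μ : Measure α} [IsFiniteMeasure μ] [NeZero μ]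
    {h : α → ℝ} (h_int : Integrable h μ) {L U : ℝ} (hLU : L ≠ U) :
    HasSum (fun k => poissonMixtureTerm μ (U - L) k (gpeEstimator μ L U h))
      (Real.exp (-∫ x, h x ∂μ)) := by
  have hUL : U - L ≠ 0 := sub_ne_zero.mpr hLU.symm
  have integral_factor : ∫ x, (U - h x) / (U - L) ∂μ =
      (U * μ.real Set.univ - ∫ x, h x ∂μ) / (U - L) := by
    rw [integral_div, integral_sub (integrable_const U) h_int, integral_const, smul_eq_mul,
      mul_comm]
  have exponent_eq : -∫ x, h x ∂μ = -(L * μ.real Set.univ) +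
      (U - L) * (∫ x, (U - h x) / (U - L) ∂μ - μ.real Set.univ) := by
    rw [integral_factor]
    field_simp
    ring
  have term_eq (k : ℕ) : poissonMixtureTerm μ (U - L) k (gpeEstimator μ L U h) =
      Real.exp (-(L * μ.real Set.univ)) *
        poissonMixtureTerm μ (U - L) k fun ξ => ∏ i, (U - h (ξ i)) / (U - L) :=
    poissonMixtureTerm_const_mul μ (U - L) k _ _
  simp only [term_eq, exponent_eq, Real.exp_add]
  exact (hasSum_poissonMixtureTerm_prod μ (U - L) fun x => (U - h x) / (U - L)).mul_left _

theorem gpeEstimator_mem_Icc (μ : Measure α) {L U : ℝ} {h : α → ℝ} {k : ℕ}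
    {ξ : Fin k → α} (hξ : ∀ i, h (ξ i) ∈ Set.Icc L U) :
    gpeEstimator μ L U h ξ ∈ Set.Icc 0 (Real.exp (-(L * μ.real Set.univ))) := by
  have factor_nonneg (i : Fin k) : 0 ≤ (U - h (ξ i)) / (U - L) :=
    div_nonneg (sub_nonneg.mpr (hξ i).2) (sub_nonneg.mpr ((hξ i).1.trans (hξ i).2))
  have factor_le_one (i : Fin k) : (U - h (ξ i)) / (U - L) ≤ 1 :=
    div_le_one_of_le₀ (sub_le_sub_left (hξ i).1 U)
      (sub_nonneg.mpr ((hξ i).1.trans (hξ i).2))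
  exact ⟨mul_nonneg (Real.exp_nonneg _) (Finset.prod_nonneg fun i _ => factor_nonneg i),
    mul_le_of_le_one_right (Real.exp_nonneg _)
      (Finset.prod_le_one (fun i _ => factor_nonneg i) fun i _ => factor_le_one i)⟩

theorem statement5_general {μ : Measure α} [IsFiniteMeasure μ] [NeZero μ] {h : α → ℝ}
    (h_int : Integrable h μ) {L U : ℝ} (hLU : L < U) :
    HasSum (fun k => poissonMixtureTerm μ (U - L) k (gpeEstimator μ L U h))
        (Real.exp (-∫ x, h x ∂μ)) ∧
      ∀ (k : ℕ) (ξ : Fin k → α), (∀ i, h (ξ i) ∈ Set.Icc L U) →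
        gpeEstimator μ L U h ξ ∈ Set.Icc 0 (Real.exp (-(L * μ.real Set.univ))) :=
  ⟨hasSum_poissonMixtureTerm_gpeEstimator h_int hLU.ne, fun _ _ => gpeEstimator_mem_Icc μ⟩

end PoissonEstimator

/-- GPE-1 estimator: with `κ ∼ Poisson((U-L)Δ)` and conditionally i.i.d.
uniform times `ξ_1, …, ξ_κ` on `[s,t]`, the estimator
`ρ̃⁽ᵃ⁾ = e^{-LΔ} ∏ᵢ (U - h(ξᵢ))/(U - L)`
(i) has expectation `exp(-∫_s^t h)` — the expectation over the mixture law being the Poisson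
mixture of expectations with respect to the `k`-fold product of the uniform distribution on
`[s,t]` (written as `(t-s)^{-k}` times the integral over the product of restricted Lebesgue
measures) — and (ii) takes values in `[0, e^{-LΔ}]`. -/
theorem statement5 (s t : ℝ) (hst : s < t) (h : ℝ → ℝ) (hmeas : Measurable h)
    (L U : ℝ) (hLU : L < U)
    (hL : ∀ u ∈ Set.Icc s t, L ≤ h u) (hU : ∀ u ∈ Set.Icc s t, h u ≤ U) :
    (∑' k : ℕ,
        (Real.exp (-((U - L) * (t - s))) * ((U - L) * (t - s)) ^ k / (Nat.factorial k)) *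
          (((t - s) ^ k)⁻¹ *
            ∫ ξ : Fin k → ℝ,
              (Real.exp (-(L * (t - s))) * ∏ i, (U - h (ξ i)) / (U - L))
              ∂(Measure.pi fun _ : Fin k => volume.restrict (Set.Icc s t))))
      = Real.exp (-∫ u in s..t, h u)
    ∧ ∀ (k : ℕ) (ξ : Fin k → ℝ), (∀ i, ξ i ∈ Set.Icc s t) →
        0 ≤ Real.exp (-(L * (t - s))) * ∏ i, (U - h (ξ i)) / (U - L) ∧
          Real.exp (-(L * (t - s))) * ∏ i, (U - h (ξ i)) / (U - L)
            ≤ Real.exp (-(L * (t - s))) := by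
  have h_mem : ∀ u ∈ Set.Icc s t, h u ∈ Set.Icc L U := fun u hu => ⟨hL u hu, hU u hu⟩
  have h_int : IntegrableOn h (Set.Icc s t) :=
    .of_mem_Icc L U hmeas.aemeasurable (ae_restrict_of_forall_mem measurableSet_Icc h_mem)
  have : NeZero (volume.restrict (Set.Icc s t)) := ⟨by simp [hst]⟩
  obtain ⟨expectation, bounds⟩ := statement5_general h_int hLU
  simp only [poissonMixtureTerm, gpeEstimator, measureReal_restrict_apply_univ,
    Real.volume_real_Icc_of_le hst.le] at expectation bounds
  rw [integral_Icc_eq_integral_Ioc, ← intervalIntegral.integral_of_le hst.le] at expectation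
  exact ⟨expectation.tsum_eq, fun k ξ hξ => bounds k ξ fun i => h_mem _ (hξ i)⟩
end

section
/- Let d ≥ 1 and C ≥ 2 be integers and let b, m, T, k_1, λ > 0 be reals. Suppose σ_a² = b(C−1)λ/m and T ≥ b C^{3/2} k_1 / m. Then exp{ −σ_a² (b/m) / ( (T/C + b/m)(T/C + 2b/m) ) } · [ 1 + (Cb/(Tm))² / (1 + 2Cb/(Tm)) ]^{−(C−1)d/2} ≥ exp{ −λ/k_1² − d/(2k_1²) }. -/
/-!
Write `x = C b / (T m)` for the ratio of `b / m` to `T / C`. Each factor is at least the exponential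
of a negative multiple of `C x²`: in the first, `σ_a² ≤ C λ b / m` and the denominator is at least
`(T / C)²`; in the second, `1 + y ≤ exp y` turns the power into an exponential. The scaling
`T ≥ b C^(3/2) k₁ / m` says exactly that `C x² ≤ 1 / k₁²`.
-/

theorem exp_neg_mul_le_one_add_rpow_neg {s y : ℝ} (hs : 0 ≤ s) (hy : -1 < y) :
    Real.exp (-(s * y)) ≤ (1 + y) ^ (-s) :=
  calc Real.exp (-(s * y)) = Real.exp y ^ (-s) := by rw [← Real.exp_mul]; ring_nf
    _ ≤ (1 + y) ^ (-s) :=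
      Real.rpow_le_rpow_of_nonpos (by linarith) (by linarith [Real.add_one_le_exp y])
        (neg_nonpos.mpr hs)

theorem exp_neg_le_one_add_sq_div_rpow {C d x ε : ℝ} (hC : 0 ≤ C) (hd : 0 ≤ d) (hx : 0 ≤ x)
    (hε : C * x ^ 2 ≤ ε) :
    Real.exp (-(d * ε / 2)) ≤ (1 + x ^ 2 / (1 + 2 * x)) ^ (-((C - 1) * d / 2)) := by
  have hy_nonneg : 0 ≤ x ^ 2 / (1 + 2 * x) := by positivity
  have hy_le : x ^ 2 / (1 + 2 * x) ≤ x ^ 2 := div_le_self (sq_nonneg x) (by linarith)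
  have hexponent : C * d / 2 * (x ^ 2 / (1 + 2 * x)) ≤ d * ε / 2 :=
    calc C * d / 2 * (x ^ 2 / (1 + 2 * x)) ≤ C * d / 2 * x ^ 2 := by gcongr
      _ = d * (C * x ^ 2) / 2 := by ring
      _ ≤ d * ε / 2 := by gcongr
  calc Real.exp (-(d * ε / 2)) ≤ Real.exp (-(C * d / 2 * (x ^ 2 / (1 + 2 * x)))) :=
        Real.exp_le_exp.mpr (neg_le_neg hexponent)
    _ ≤ (1 + x ^ 2 / (1 + 2 * x)) ^ (-(C * d / 2)) :=
      exp_neg_mul_le_one_add_rpow_neg (by positivity) (by linarith)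
    _ ≤ (1 + x ^ 2 / (1 + 2 * x)) ^ (-((C - 1) * d / 2)) :=
      Real.rpow_le_rpow_of_exponent_le (by linarith) (by linarith)

theorem mul_div_add_mul_add_two_mul_le {c σ u τ : ℝ} (hc : 0 ≤ c) (hu : 0 ≤ u) (hτ : 0 < τ)
    (hσ : σ ≤ c * u) :
    σ * u / ((τ + u) * (τ + 2 * u)) ≤ c * (u / τ) ^ 2 := by
  have hden : τ ^ 2 ≤ (τ + u) * (τ + 2 * u) := by
    rw [sq]
    gcongr <;> linarith
  calc σ * u / ((τ + u) * (τ + 2 * u)) ≤ c * u * u / ((τ + u) * (τ + 2 * u)) := by gcongr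
    _ ≤ c * u * u / τ ^ 2 := by gcongr
    _ = c * (u / τ) ^ 2 := by ring

theorem mul_sq_mul_div_le_one_div_sq {C k T u : ℝ} (hC : 0 ≤ C) (hk : 0 < k) (hT : 0 < T)
    (hu : 0 ≤ u) (hscale : u * C ^ ((3 : ℝ) / 2) * k ≤ T) :
    C * (C * u / T) ^ 2 ≤ 1 / k ^ 2 := by
  have hpow : (C ^ ((3 : ℝ) / 2)) ^ 2 = C ^ 3 := by
    rw [← Real.rpow_mul_natCast hC, ← Real.rpow_natCast]
    norm_num
  have hratio : u * C ^ ((3 : ℝ) / 2) / T ≤ 1 / k := by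
    rw [div_le_div_iff₀ hT hk, one_mul]
    exact hscale
  calc C * (C * u / T) ^ 2 = (u * C ^ ((3 : ℝ) / 2) / T) ^ 2 := by
        rw [div_pow, div_pow, mul_pow u, hpow]
        ring
    _ ≤ (1 / k) ^ 2 := by gcongr
    _ = 1 / k ^ 2 := one_div_pow k 2

theorem statement10_general {d C b m T k₁ lam σa2 : ℝ} (hC : 0 < C) (hd : 0 ≤ d) (hb : 0 < b)
    (hm : 0 < m) (hk₁ : 0 < k₁) (hlam : 0 ≤ lam) (hσ : σa2 ≤ b * (C - 1) * lam / m)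
    (hT : b * C ^ ((3 : ℝ) / 2) * k₁ / m ≤ T) :
    Real.exp (-(lam / k₁ ^ 2) - d / (2 * k₁ ^ 2)) ≤
      Real.exp (-(σa2 * (b / m) / ((T / C + b / m) * (T / C + 2 * b / m)))) *
        (1 + (C * b / (T * m)) ^ 2 / (1 + 2 * C * b / (T * m))) ^ (-((C - 1) * d / 2)) := by
  have hT_pos : 0 < T := lt_of_lt_of_le (by positivity) hT
  have hx : C * b / (T * m) = C * (b / m) / T := by field_simp
  have hscale : C * (C * b / (T * m)) ^ 2 ≤ 1 / k₁ ^ 2 := by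
    rw [hx]
    exact mul_sq_mul_div_le_one_div_sq hC.le hk₁ hT_pos (by positivity)
      (le_of_eq_of_le (by ring) hT)
  have hσ_le : σa2 ≤ C * lam * (b / m) :=
    calc σa2 ≤ b * (C - 1) * lam / m := hσ
      _ ≤ b * C * lam / m := by gcongr; exact sub_le_self C zero_le_one
      _ = C * lam * (b / m) := by ring
  have hfirst : σa2 * (b / m) / ((T / C + b / m) * (T / C + 2 * (b / m))) ≤ lam / k₁ ^ 2 :=
    calc _ ≤ C * lam * (b / m / (T / C)) ^ 2 :=
          mul_div_add_mul_add_two_mul_le (by positivity) (by positivity) (by positivity) hσ_le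
      _ = lam * (C * (C * b / (T * m)) ^ 2) := by field_simp
      _ ≤ lam * (1 / k₁ ^ 2) := by gcongr
      _ = lam / k₁ ^ 2 := mul_one_div _ _
  calc Real.exp (-(lam / k₁ ^ 2) - d / (2 * k₁ ^ 2))
      = Real.exp (-(lam / k₁ ^ 2)) * Real.exp (-(d * (1 / k₁ ^ 2) / 2)) := by
        rw [← Real.exp_add]
        ring_nf
    _ ≤ _ := by
        rw [mul_assoc 2, mul_div_assoc 2, mul_div_assoc 2]
        exact mul_le_mul (Real.exp_le_exp.mpr (neg_le_neg hfirst))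
          (exp_neg_le_one_add_sq_div_rpow hC.le hd (by positivity) hscale)
          (Real.exp_nonneg _) (Real.exp_nonneg _)

/-- Corollary 12(a) of the paper: lower bound on the limiting
`N⁻¹·CESS₀` under the sub-posterior homogeneity condition `SH(λ)`,
when `T ≥ b C^{3/2} k₁ / m`. -/
theorem statement10 (d C : ℕ) (hd : 1 ≤ d) (hC : 2 ≤ C)
    (b m T k₁ lam σa2 : ℝ)
    (hb : 0 < b) (hm : 0 < m) (hT : 0 < T) (hk₁ : 0 < k₁) (hlam : 0 < lam)
    (hσ : σa2 = b * ((C : ℝ) - 1) * lam / m)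
    (hT2 : b * (C : ℝ) ^ ((3 : ℝ) / 2) * k₁ / m ≤ T) :
    Real.exp (-(lam / k₁ ^ 2) - (d : ℝ) / (2 * k₁ ^ 2)) ≤
      Real.exp (-(σa2 * (b / m) / ((T / C + b / m) * (T / C + 2 * b / m)))) *
        (1 + ((C : ℝ) * b / (T * m)) ^ 2 / (1 + 2 * (C : ℝ) * b / (T * m))) ^
          (-(((C : ℝ) - 1) * d / 2)) := by
  have hC' : (0 : ℝ) < C := by exact_mod_cast two_pos.trans_le hC
  exact statement10_general hC' d.cast_nonneg hb hm hk₁ hlam.le hσ.le hT2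
end

section
/- Let ζ′ ∈ (0, 1), write L := log ζ′ < 0, and let c_1, c_2 > 0 be reals; set A := c_2/c_1². Define k_4 := [ (A − 2L) − √( (2L − A)² − 4L² ) ] / 2. Then: (i) (2L − A)² − 4L² = A(A − 4L) > 0, so k_4 is a real number; (ii) 0 < k_4 < −L; (iii) k_4 satisfies k_4² + (2L − A) k_4 + L² = 0, equivalently c_1(−L − k_4) = √(c_2 k_4); and (iv) for every k ∈ (0, −L), min{ c_1(−L − k), √(c_2 k) } ≤ √(c_2 k_4), i.e. k_4 maximises the interval size min{ c_1(−L − k), √(c_2 k) } over k ∈ (0, −L). -/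
/-!
In `k`, the bound `c₁ (-L - k)` decreases and the bound `√(c₂ k)` increases, so their minimum is
largest where they cross. For `0 ≤ k ≤ -L` squaring turns the crossing equation into `q k = 0` with
`q k = k² + (2L - A) k + L²`. Since `q (-L) = A L < 0`, the point `-L` lies strictly between the two
roots of `q`, so it is the smaller root that meets the constraint `k < -L`.
-/

theorem min_le_max_of_antitone_of_monotone {α β : Type*} [LinearOrder α] [LinearOrder β]
    {f g : α → β} (hf : Antitone f) (hg : Monotone g) (x y : α) :
    min (f x) (g x) ≤ max (f y) (g y) := by
  rcases le_total x y with hxy | hyx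
  · exact min_le_of_right_le (le_max_of_le_right (hg hxy))
  · exact min_le_of_left_le (le_max_of_le_left (hf hyx))

/-- The smaller real root of the monic quadratic `X² + b X + c`. If the discriminant is negative,
the square root is `0` and the value is `-b / 2`, which is not a root. -/
noncomputable def smallerRoot (b c : ℝ) : ℝ :=
  (-b - √(b ^ 2 - 4 * c)) / 2

section smallerRoot

variable {b c : ℝ}

theorem smallerRoot_isRoot (h : 4 * c ≤ b ^ 2) :
    smallerRoot b c ^ 2 + b * smallerRoot b c + c = 0 := by
  have hsq : √(b ^ 2 - 4 * c) ^ 2 = b ^ 2 - 4 * c := Real.sq_sqrt (sub_nonneg.2 h)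
  unfold smallerRoot
  linear_combination hsq / 4

theorem smallerRoot_pos (hb : b < 0) (hc : 0 < c) : 0 < smallerRoot b c := by
  have hsqrt : √(b ^ 2 - 4 * c) < -b := (Real.sqrt_lt' (neg_pos.2 hb)).2 (by linarith)
  exact half_pos (sub_pos.2 hsqrt)

theorem smallerRoot_lt_of_neg {x : ℝ} (hx : x ^ 2 + b * x + c < 0) : smallerRoot b c < x := by
  have hsqrt : -(2 * x + b) < √(b ^ 2 - 4 * c) := Real.lt_sqrt_of_sq_lt (by linarith)
  unfold smallerRoot
  linarith

end smallerRoot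

theorem mul_neg_sub_eq_sqrt_mul_iff {c₁ c₂ k L : ℝ} (hc₁ : 0 < c₁) (hk : 0 ≤ c₂ * k)
    (hkL : k ≤ -L) :
    c₁ * (-L - k) = √(c₂ * k) ↔ k ^ 2 + (2 * L - c₂ / c₁ ^ 2) * k + L ^ 2 = 0 := by
  have hscale : (c₁ * (-L - k)) ^ 2 - c₂ * k =
      c₁ ^ 2 * (k ^ 2 + (2 * L - c₂ / c₁ ^ 2) * k + L ^ 2) := by
    field_simp
    ring
  rw [eq_comm, Real.sqrt_eq_iff_eq_sq hk (mul_nonneg hc₁.le (sub_nonneg.2 hkL)), eq_comm,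
    ← sub_eq_zero, hscale, mul_eq_zero_iff_left (pow_ne_zero 2 hc₁.ne')]

/-- Proposition 18 of the paper: with `L = log ζ′ < 0`, `A = c₂/c₁²`,
the root `k₄ = ((A - 2L) - √((2L - A)² - 4L²))/2` is well-defined, lies in `(0, -L)`, satisfies
the quadratic `k₄² + (2L - A)k₄ + L² = 0` (equivalently `c₁(-L - k₄) = √(c₂ k₄)`), and
maximises the interval size `min{c₁(-L - k), √(c₂ k)}` over `k ∈ (0, -L)`. -/
theorem statement14 (ζ' : ℝ) (hζ : ζ' ∈ Set.Ioo (0 : ℝ) 1)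
    (c₁ c₂ : ℝ) (hc₁ : 0 < c₁) (hc₂ : 0 < c₂) :
    let L : ℝ := Real.log ζ'
    let A : ℝ := c₂ / c₁ ^ 2
    let k₄ : ℝ := ((A - 2 * L) - Real.sqrt ((2 * L - A) ^ 2 - 4 * L ^ 2)) / 2
    L < 0 ∧
      ((2 * L - A) ^ 2 - 4 * L ^ 2 = A * (A - 4 * L) ∧ 0 < A * (A - 4 * L)) ∧
      (0 < k₄ ∧ k₄ < -L) ∧
      (k₄ ^ 2 + (2 * L - A) * k₄ + L ^ 2 = 0 ∧ c₁ * (-L - k₄) = Real.sqrt (c₂ * k₄)) ∧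
      (∀ k ∈ Set.Ioo (0 : ℝ) (-L),
        min (c₁ * (-L - k)) (Real.sqrt (c₂ * k)) ≤ Real.sqrt (c₂ * k₄)) := by
  intro L A k₄
  have hL : L < 0 := Real.log_neg hζ.1 hζ.2
  have hA : 0 < A := by positivity
  have hdisc : (2 * L - A) ^ 2 - 4 * L ^ 2 = A * (A - 4 * L) := by ring
  have hdisc_pos : 0 < A * (A - 4 * L) := mul_pos hA (by linarith)
  have hk₄ : k₄ = smallerRoot (2 * L - A) (L ^ 2) := by
    simp only [k₄, smallerRoot, neg_sub]
  have hk₄_pos : 0 < k₄ := hk₄ ▸ smallerRoot_pos (by linarith) (sq_pos_of_neg hL)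
  have hneg : (-L) ^ 2 + (2 * L - A) * -L + L ^ 2 < 0 := by
    linear_combination mul_neg_of_pos_of_neg hA hL
  have hk₄_lt : k₄ < -L := hk₄ ▸ smallerRoot_lt_of_neg hneg
  have hroot : k₄ ^ 2 + (2 * L - A) * k₄ + L ^ 2 = 0 :=
    hk₄ ▸ smallerRoot_isRoot (by linarith)
  have hcross : c₁ * (-L - k₄) = √(c₂ * k₄) :=
    (mul_neg_sub_eq_sqrt_mul_iff hc₁ (by positivity) hk₄_lt.le).2 hroot
  refine ⟨hL, ⟨hdisc, hdisc_pos⟩, ⟨hk₄_pos, hk₄_lt⟩, ⟨hroot, hcross⟩, fun k _ ↦ ?_⟩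
  have hanti : Antitone fun k ↦ c₁ * (-L - k) := fun _ _ h ↦ by dsimp only; gcongr
  have hmono : Monotone fun k ↦ √(c₂ * k) := fun _ _ h ↦ by dsimp only; gcongr
  simpa only [hcross, max_self] using min_le_max_of_antitone_of_monotone hanti hmono k k₄
end

section
/- Let d ≥ 1 and K ≥ 1 be integers, let Λ_1, …, Λ_K be symmetric positive definite d×d real matrices, set Λ_𝒞 := (∑_{c=1}^K Λ_c^{−1})^{−1}, and let τ > 0. Define H : (ℝ^d)^K → (0, ∞) by H(x_1, …, x_K) := ∫_{ℝ^d} ∏_{c=1}^K exp{ −(y − x_c)ᵀ Λ_c^{−1} (y − x_c) / (2τ) } dy. Then for each c ∈ {1, …, K}, the gradient of log H with respect to the block variable x_c equals Λ_c^{−1} ( x̃ − x_c ) / τ, where x̃ := Λ_𝒞 ∑_{j=1}^K Λ_j^{−1} x_j. -/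
open MeasureTheory Matrix

/-!
Since `m = (∑ Pⱼ)⁻¹ ∑ Pⱼ zⱼ` solves the normal equation `∑ Pⱼ (zⱼ - m) = 0`, completing the square
splits `∑ (y - zⱼ)ᵀ Pⱼ (y - zⱼ)` into `(y - m)ᵀ (∑ Pⱼ) (y - m)` and the dispersion
`V(z) = ∑ (zⱼ - m)ᵀ Pⱼ (zⱼ - m)`. By translation invariance of Lebesgue measure the logarithm of the
integral is thus `-V(z) / (2τ)` plus a constant. Although `m` depends on `z`, the normal equation
also removes its variation from the derivative of `V`, which is `w ↦ 2 ∑ Pⱼ (zⱼ - m) ⬝ wⱼ`.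
-/

section PrecisionMean

variable {ι n R : Type*} [Fintype ι] [Fintype n] [CommRing R]

theorem dotProduct_mulVec_sub_self {A : Matrix n n R} (hA : A.IsSymm) (x y : n → R) :
    (x - y) ⬝ᵥ A *ᵥ (x - y) = x ⬝ᵥ A *ᵥ x - 2 * (x ⬝ᵥ A *ᵥ y) + y ⬝ᵥ A *ᵥ y := by
  have hyx : y ⬝ᵥ A *ᵥ x = x ⬝ᵥ A *ᵥ y := by rw [← dotProduct_transpose_mulVec, hA.eq]
  simp only [mulVec_sub, dotProduct_sub, sub_dotProduct, hyx]
  ring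

variable [DecidableEq n] {P : ι → Matrix n n R}

/-- The mean of the points `z j` weighted by the precision matrices `P j`, as a linear map in `z`.
It is meaningful when `∑ j, P j` is invertible. -/
noncomputable def precisionMean (P : ι → Matrix n n R) : (ι → n → R) →ₗ[R] n → R where
  toFun z := (∑ j, P j)⁻¹ *ᵥ ∑ j, P j *ᵥ z j
  map_add' z w := by simp only [Pi.add_apply, mulVec_add, Finset.sum_add_distrib]
  map_smul' a z := by
    simp only [Pi.smul_apply, mulVec_smul, ← Finset.smul_sum, RingHom.id_apply]

/-- The total squared deviation of the points `z j` from their precision-weighted mean, each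
deviation being measured by the quadratic form of `P j`. -/
noncomputable def precisionDispersion (P : ι → Matrix n n R) (z : ι → n → R) : R :=
  ∑ j, (z j - precisionMean P z) ⬝ᵥ P j *ᵥ (z j - precisionMean P z)

theorem sum_mulVec_sub_precisionMean (hS : IsUnit (∑ j, P j)) (z : ι → n → R) :
    ∑ j, P j *ᵥ (z j - precisionMean P z) = 0 := by
  have hmean : (∑ j, P j) *ᵥ precisionMean P z = ∑ j, P j *ᵥ z j := by
    change (∑ j, P j) *ᵥ (∑ j, P j)⁻¹ *ᵥ _ = _
    rw [mulVec_mulVec, mul_nonsing_inv _ ((isUnit_iff_isUnit_det _).1 hS), one_mulVec]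
  simp only [mulVec_sub, Finset.sum_sub_distrib, ← sum_mulVec, hmean, sub_self]

theorem sum_dotProduct_mulVec_eq_add_precisionDispersion (hP : ∀ j, (P j).IsSymm)
    (hS : IsUnit (∑ j, P j)) (z : ι → n → R) (y : n → R) :
    ∑ j, (y - z j) ⬝ᵥ P j *ᵥ (y - z j) =
      (y - precisionMean P z) ⬝ᵥ (∑ j, P j) *ᵥ (y - precisionMean P z) +
        precisionDispersion P z := by
  set m := precisionMean P z
  have hcross : ∑ j, (y - m) ⬝ᵥ P j *ᵥ (z j - m) = 0 := by
    rw [← dotProduct_sum, sum_mulVec_sub_precisionMean hS, dotProduct_zero]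
  calc ∑ j, (y - z j) ⬝ᵥ P j *ᵥ (y - z j)
      = ∑ j, ((y - m) ⬝ᵥ P j *ᵥ (y - m) - 2 * ((y - m) ⬝ᵥ P j *ᵥ (z j - m)) +
          (z j - m) ⬝ᵥ P j *ᵥ (z j - m)) := by
        simp only [← dotProduct_mulVec_sub_self (hP _), sub_sub_sub_cancel_right]
    _ = (y - m) ⬝ᵥ (∑ j, P j) *ᵥ (y - m) + precisionDispersion P z := by
        rw [Finset.sum_add_distrib, Finset.sum_sub_distrib, ← Finset.mul_sum, hcross, mul_zero,
          sub_zero, sum_mulVec, dotProduct_sum, precisionDispersion]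

end PrecisionMean

section Derivative

variable {ι n 𝕜 : Type*} [Fintype ι] [NontriviallyNormedField 𝕜]

theorem hasFDerivAt_comp_update [DecidableEq ι] {E F : Type*} [NormedAddCommGroup E]
    [NormedSpace 𝕜 E] [NormedAddCommGroup F] [NormedSpace 𝕜 F] {f : (ι → E) → F}
    {f' : ι → E →L[𝕜] F} {x : ι → E}
    (hf : HasFDerivAt f (∑ j, f' j ∘L ContinuousLinearMap.proj j) x) (c : ι) :
    HasFDerivAt (fun v => f (Function.update x c v)) (f' c) (x c) := by
  rw [← Function.update_eq_self c x] at hf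
  refine (hf.comp (x c) (hasFDerivAt_update x (x c))).congr_fderiv
    (ContinuousLinearMap.ext fun w => ?_)
  simp only [ContinuousLinearMap.comp_apply, _root_.sum_apply,
    ContinuousLinearMap.proj_apply, ContinuousLinearMap.pi_apply]
  rw [Finset.sum_eq_single_of_mem c (Finset.mem_univ c) fun j _ hj => by simp [hj]]
  simp

variable [Fintype n] [CompleteSpace 𝕜]

/-- The continuous linear functional `v ↦ u ⬝ᵥ v`, in which gradients are expressed. -/
noncomputable def dotProductCLM (u : n → 𝕜) : (n → 𝕜) →L[𝕜] 𝕜 :=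
  (dotProductBilin 𝕜 𝕜 u).toContinuousLinearMap

@[simp]
theorem dotProductCLM_apply (u v : n → 𝕜) : dotProductCLM u v = u ⬝ᵥ v := rfl

theorem hasFDerivAt_dotProduct_mulVec_self {A : Matrix n n 𝕜} (hA : A.IsSymm) (x : n → 𝕜) :
    HasFDerivAt (fun v => v ⬝ᵥ A *ᵥ v) ((2 : 𝕜) • dotProductCLM (A *ᵥ x)) x := by
  have hbilin := (dotProductBilin 𝕜 𝕜).toContinuousBilinearMap.hasFDerivAt_of_bilinear
    (hasFDerivAt_id x) (A.mulVecLin.toContinuousLinearMap.hasFDerivAt (x := x))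
  refine hbilin.congr_fderiv (ContinuousLinearMap.ext fun w => ?_)
  have hxw : x ⬝ᵥ A *ᵥ w = A *ᵥ x ⬝ᵥ w := by
    rw [dotProduct_mulVec, ← mulVec_transpose, hA.eq]
  simp [hxw, dotProduct_comm w, two_mul]

theorem hasFDerivAt_precisionDispersion [DecidableEq n] {P : ι → Matrix n n 𝕜}
    (hP : ∀ j, (P j).IsSymm) (hS : IsUnit (∑ j, P j)) (z : ι → n → 𝕜) :
    HasFDerivAt (precisionDispersion P)
      (∑ j, ((2 : 𝕜) • dotProductCLM (P j *ᵥ (z j - precisionMean P z))) ∘L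
        ContinuousLinearMap.proj j) z := by
  let m : (ι → n → 𝕜) →L[𝕜] n → 𝕜 := (precisionMean P).toContinuousLinearMap
  have hterm (j : ι) : HasFDerivAt (fun x => (x j - m x) ⬝ᵥ P j *ᵥ (x j - m x))
      (((2 : 𝕜) • dotProductCLM (P j *ᵥ (z j - m z))) ∘L (ContinuousLinearMap.proj j - m)) z :=
    HasFDerivAt.comp (g := fun v => v ⬝ᵥ P j *ᵥ v) z
      (hasFDerivAt_dotProduct_mulVec_self (hP j) (z j - m z))
      (ContinuousLinearMap.proj j - m).hasFDerivAt
  refine (HasFDerivAt.fun_sum fun j _ => hterm j).congr_fderiv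
    (ContinuousLinearMap.ext fun w => ?_)
  have hmean : ∑ j, P j *ᵥ (z j - precisionMean P z) ⬝ᵥ precisionMean P w = 0 := by
    rw [← sum_dotProduct, sum_mulVec_sub_precisionMean hS, zero_dotProduct]
  simp [m, ← Finset.mul_sum, Finset.sum_sub_distrib, hmean]

end Derivative

section GaussianIntegral

variable {ι n : Type*} [Fintype ι] [Fintype n]

theorem integrable_exp_neg_dotProduct_mulVec {S : Matrix n n ℝ} (hS : S.PosDef) :
    Integrable fun y : n → ℝ => Real.exp (-(y ⬝ᵥ S *ᵥ y)) := by
  classical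
  obtain ⟨B, hB, hSB⟩ : ∃ B : Matrix n n ℝ, IsUnit B ∧ S = Bᵀ * B := by
    open scoped MatrixOrder in
    simpa [star_eq_conjTranspose] using
      CStarAlgebra.isStrictlyPositive_iff_eq_star_mul_self.mp hS.isStrictlyPositive
  have hstd : Integrable fun u : n → ℝ => ∏ i, Real.exp (-1 * u i ^ 2) :=
    Integrable.fintype_prod fun _ => integrable_exp_neg_mul_sq one_pos
  have hmap : Integrable (fun u : n → ℝ => ∏ i, Real.exp (-1 * u i ^ 2))
      (volume.map (toLin' B)) := by
    rw [Real.map_matrix_volume_pi_eq_smul_volume_pi ((isUnit_iff_isUnit_det B).1 hB).ne_zero]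
    exact hstd.smul_measure ENNReal.ofReal_ne_top
  convert! hmap.comp_measurable (LinearMap.continuous_of_finiteDimensional _).measurable with y
  have hsq : y ⬝ᵥ S *ᵥ y = ∑ i, (B *ᵥ y) i ^ 2 := by
    rw [hSB, ← mulVec_mulVec, dotProduct_transpose_mulVec]
    simp only [dotProduct, sq]
  simp only [Function.comp_apply, toLin'_apply, ← Real.exp_sum, hsq, neg_one_mul,
    Finset.sum_neg_distrib]

/-- The space-time harmonic function `H`: the total mass of a product of unnormalized
Gaussian densities in `y` with centres `z j` and covariances `τ • (P j)⁻¹`. -/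
noncomputable def gaussianProductIntegral (P : ι → Matrix n n ℝ) (τ : ℝ) (z : ι → n → ℝ) : ℝ :=
  ∫ y : n → ℝ, ∏ j, Real.exp (-((y - z j) ⬝ᵥ P j *ᵥ (y - z j)) / (2 * τ))

variable [DecidableEq n] {P : ι → Matrix n n ℝ}

theorem gaussianProductIntegral_eq_exp_mul (hP : ∀ j, (P j).IsSymm) (hS : IsUnit (∑ j, P j))
    (τ : ℝ) (z : ι → n → ℝ) :
    gaussianProductIntegral P τ z = Real.exp (-precisionDispersion P z / (2 * τ)) *
      ∫ y : n → ℝ, Real.exp (-(y ⬝ᵥ (∑ j, P j) *ᵥ y) / (2 * τ)) := by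
  rw [← integral_sub_right_eq_self _ (precisionMean P z), ← integral_const_mul]
  refine integral_congr_ae (.of_forall fun y => ?_)
  simp only [← Real.exp_sum, ← Real.exp_add, ← Finset.sum_div, Finset.sum_neg_distrib,
    sum_dotProduct_mulVec_eq_add_precisionDispersion hP hS z y]
  ring_nf

theorem log_gaussianProductIntegral (hP : ∀ j, (P j).IsSymm) (hS : (∑ j, P j).PosDef) {τ : ℝ}
    (hτ : 0 < τ) (z : ι → n → ℝ) :
    Real.log (gaussianProductIntegral P τ z) = -precisionDispersion P z / (2 * τ) +
      Real.log (∫ y : n → ℝ, Real.exp (-(y ⬝ᵥ (∑ j, P j) *ᵥ y) / (2 * τ))) := by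
  have hint : Integrable fun y : n → ℝ => Real.exp (-(y ⬝ᵥ (∑ j, P j) *ᵥ y) / (2 * τ)) := by
    have hscaled : ((2 * τ)⁻¹ • ∑ j, P j).PosDef := hS.smul (by positivity)
    convert integrable_exp_neg_dotProduct_mulVec hscaled using 3 with y
    rw [smul_mulVec, dotProduct_smul, smul_eq_mul, neg_div, div_eq_inv_mul]
  rw [gaussianProductIntegral_eq_exp_mul hP hS.isUnit,
    Real.log_mul (Real.exp_ne_zero _) (integral_exp_pos hint).ne', Real.log_exp]

theorem statement18_general (hP : ∀ j, (P j).IsSymm) (hS : (∑ j, P j).PosDef) {τ : ℝ}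
    (hτ : 0 < τ) (z : ι → n → ℝ) :
    HasFDerivAt (fun x => Real.log (gaussianProductIntegral P τ x))
      (∑ j, (τ⁻¹ • dotProductCLM (P j *ᵥ (precisionMean P z - z j))) ∘L
        ContinuousLinearMap.proj j) z := by
  simp only [log_gaussianProductIntegral hP hS hτ, div_eq_inv_mul]
  have hV := hasFDerivAt_precisionDispersion hP hS.isUnit z
  refine ((hV.fun_neg.const_mul (2 * τ)⁻¹).add_const _).congr_fderiv
    (ContinuousLinearMap.ext fun w => ?_)
  have hflip (j : ι) : P j *ᵥ (precisionMean P z - z j) = -(P j *ᵥ (z j - precisionMean P z)) := by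
    rw [← mulVec_neg, neg_sub]
  simp [← Finset.mul_sum, hflip, mul_assoc]

end GaussianIntegral

/-- the gradient of the logarithm of the space-time harmonic function
`H(x₁,…,x_K) = ∫ ∏_c exp(-(y-x_c)ᵀΛ_c⁻¹(y-x_c)/(2τ)) dy` with respect to the block variable
`x_c` equals `Λ_c⁻¹(x̃ - x_c)/τ`: the map is differentiable in `x_c` and its derivative in any
direction `w` is `⟨Λ_c⁻¹(x̃ - x_c), w⟩/τ`. -/
theorem statement18 (d K : ℕ) (hd : 1 ≤ d) (hK : 1 ≤ K)
    (Λ : Fin K → Matrix (Fin d) (Fin d) ℝ) (hΛ : ∀ c, (Λ c).PosDef)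
    (τ : ℝ) (hτ : 0 < τ) (x : Fin K → Fin d → ℝ) :
    let H : (Fin K → Fin d → ℝ) → ℝ := fun z =>
      ∫ y : Fin d → ℝ, ∏ c, Real.exp (-((y - z c) ⬝ᵥ (Λ c)⁻¹.mulVec (y - z c)) / (2 * τ))
    let ΛC : Matrix (Fin d) (Fin d) ℝ := (∑ c, (Λ c)⁻¹)⁻¹
    let xt : Fin d → ℝ := ΛC.mulVec (∑ c, (Λ c)⁻¹.mulVec (x c))
    ∀ c : Fin K,
      DifferentiableAt ℝ (fun v => Real.log (H (Function.update x c v))) (x c) ∧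
        ∀ w : Fin d → ℝ,
          fderiv ℝ (fun v => Real.log (H (Function.update x c v))) (x c) w
            = ((Λ c)⁻¹.mulVec (xt - x c) ⬝ᵥ w) / τ := by
  intro H ΛC xt c
  have hinv (j : Fin K) : (Λ j)⁻¹.PosDef := (hΛ j).inv
  have hsum : (∑ j, (Λ j)⁻¹).PosDef := posDef_sum ⟨c, Finset.mem_univ c⟩ fun j _ => hinv j
  have hgrad := hasFDerivAt_comp_update
    (statement18_general (fun j => (hinv j).isHermitian) hsum hτ x) c
  exact ⟨hgrad.differentiableAt, fun w => hgrad.fderiv ▸ (div_eq_inv_mul _ τ).symm⟩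
end
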